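/- Let G be a finite abelian group of order n and exponent e(G), and let k > l be positive integers. If e(G) has at least one positive divisor d such that d is not congruent modulo k+l to any integer between 1 and gcd(d, k−l) inclusive, then μ(G,{k,l}) = μ(Z_{e(G)},{k,l}) · (n/e(G)). -/

import Mathlib

/-!
Put `e = exponent G`. The divisor `d` gives a sum-free interval in `ZMod d` of density at least
`1 / (k + l)` (`interval_bound`), and its preimage in `ZMod e` shows `e ≤ (k + l) * mu (ZMod e)`.
Preimages under a surjection `G → ZMod e` (`exists_surjective_zmod`, `mu_mul_card_le`) give the
lower bound for `mu G`.

The upper bound `|A| / |G| ≤ mu (ZMod e) / e` for a sum-free set `A` (`main_bound`) is proved by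
induction on `|G|`, for all groups annihilated by `e`. It is immediate if `A` has density at most
`1 / (k + l)` or if `G` is cyclic. Otherwise `A` is shown to be sum-free modulo a nontrivial
subgroup `L`, and the induction hypothesis applies to the image of `A` in `G ⧸ L`.

* If `A` lies in no coset of a proper subgroup, then `|kA| + |lA| ≤ |G| < (k + l)|A|` forces
  `|jA + A| < |jA| + |A|` for some `j` (`exists_small_growth`). Hamidoune's isoperimetric method
  (`exists_atom`, `critical_pair`) then produces a nontrivial proper subgroup `L` with
  `|A + L| < |A| + |L|`; here the case of an almost progression uses that `G` is not cyclic
  (`almost_full_zmultiples`). Such an `A` has so few holes in `A + L` that a solution of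
  `a₁ + ⋯ + a_k = b₁ + ⋯ + b_l` modulo `L` can be corrected to a true solution (`sumFree_mod`).
* If `A` has at least two elements and spans a coset of a proper subgroup `L`, Olson's bound
  (`olson_coset`) shows that `kA` and `lA` are too large to be disjoint inside one coset of `L`
  (`sumFree_mod_diffGroup`).
* A singleton is compared with the cyclic group it generates.
-/

open Finset Pointwise

/-- The `h`-fold sumset of a finite set `A`: all sums of `h` not-necessarily-distinct
elements of `A` (with the convention that the `0`-fold sumset is `{0}`). -/
def foldSum {G : Type*} [AddCommMonoid G] [DecidableEq G] : ℕ → Finset G → Finset G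
  | 0, _ => {0}
  | n + 1, A => A + foldSum n A

/-- `A` is `(k,l)`-sum-free if the `k`-fold and `l`-fold sumsets of `A` are disjoint. -/
def KLSumFree {G : Type*} [AddCommMonoid G] [DecidableEq G] (k l : ℕ) (A : Finset G) : Prop :=
  Disjoint (foldSum k A) (foldSum l A)

/-- `mu G k l` is the maximum size of a `(k,l)`-sum-free subset of `G`. -/
noncomputable def mu (G : Type*) [AddCommMonoid G] [DecidableEq G] (k l : ℕ) : ℕ :=
  sSup {m | ∃ A : Finset G, KLSumFree k l A ∧ A.card = m}

/-- Ceiling division: `cdiv a b = ⌈a / b⌉` for `b > 0`. -/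
def cdiv (a b : ℕ) : ℕ := (a + b - 1) / b

/-- The arithmetic progression `{a, a+b, ..., a+(m-1)b}` in `ZMod d`. -/
def apSet (d : ℕ) (a b : ZMod d) (m : ℕ) : Finset (ZMod d) :=
  (Finset.range m).image (fun i => a + i • b)

/-- Maximum size of a `(k,l)`-sum-free arithmetic progression in `ZMod d`. -/
noncomputable def alphaZ (d k l : ℕ) : ℕ :=
  sSup {m | ∃ a b : ZMod d, (apSet d a b m).card = m ∧ KLSumFree k l (apSet d a b m)}

/-- Maximum size of a `(k,l)`-sum-free arithmetic progression in `ZMod d` whose common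
difference is relatively prime to `d`. -/
noncomputable def gammaZ (d k l : ℕ) : ℕ :=
  sSup {m | ∃ a b : ZMod d, Nat.gcd (ZMod.val b) d = 1 ∧
    (apSet d a b m).card = m ∧ KLSumFree k l (apSet d a b m)}

/-! ### Atoms of the isoperimetric method -/

section Isoperimetric

variable {G : Type*} [AddCommGroup G] [Fintype G] [DecidableEq G]

/-- Existence of an `r`-atom of `A`: a set `X` minimising `|X + A| - |X|` among the sets with
`r ≤ |X|` and `|X + A| ≤ |G| - r`, and of least size among the minimisers. By submodularity of
`Y ↦ |Y + A|`, an atom meets each of its other translates in fewer than `r` elements. -/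
lemma exists_atom (r : ℕ) (A : Finset G) (hA : A.Nonempty)
    (hex : ∃ X : Finset G, r ≤ #X ∧ #(X + A) + r ≤ Fintype.card G) :
    ∃ X : Finset G, r ≤ #X ∧ #(X + A) + r ≤ Fintype.card G ∧
      (∀ Y : Finset G, r ≤ #Y → #(Y + A) + r ≤ Fintype.card G →
        #(X + A) + #Y ≤ #(Y + A) + #X) ∧
      ∀ g : G, g +ᵥ X ≠ X → #(X ∩ (g +ᵥ X)) < r := by
  classical
  have hle : ∀ Y : Finset G, #Y ≤ #(Y + A) := fun Y => Finset.card_le_card_add_right hA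
  set F : Finset (Finset G) :=
    univ.filter (fun X => r ≤ #X ∧ #(X + A) + r ≤ Fintype.card G) with hF
  have hFne : F.Nonempty := by
    obtain ⟨X, h⟩ := hex
    exact ⟨X, by simp [hF, h]⟩
  -- minimise the boundary first, then the cardinality
  obtain ⟨X₀, hX₀, hmin₀⟩ := F.exists_min_image (fun X => #(X + A) - #X) hFne
  obtain ⟨X, hX, hmin⟩ := (F.filter (fun X => #(X + A) - #X = #(X₀ + A) - #X₀)).exists_min_image
    (fun X => #X) ⟨X₀, by simp [hX₀]⟩
  simp only [mem_filter] at hX hmin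
  obtain ⟨hXF, hXk⟩ := hX
  have hXF' := hXF
  simp only [hF, mem_filter, mem_univ, true_and] at hXF'
  have hbd : ∀ Y : Finset G, r ≤ #Y → #(Y + A) + r ≤ Fintype.card G →
      #(X + A) + #Y ≤ #(Y + A) + #X := by
    intro Y h1 h2
    have := hmin₀ Y (by simp [hF, h1, h2])
    have := hle X; have := hle Y
    omega
  have hsm : ∀ Y : Finset G, r ≤ #Y → #(Y + A) + r ≤ Fintype.card G →
      #(Y + A) + #X ≤ #(X + A) + #Y → #X ≤ #Y := by
    intro Y h1 h2 h3
    have h4 := hbd Y h1 h2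
    apply hmin Y
    refine ⟨by simp [hF, h1, h2], ?_⟩
    have := hle X; have := hle Y
    omega
  refine ⟨X, hXF'.1, hXF'.2, hbd, ?_⟩
  intro g hg
  by_contra hI
  push Not at hI
  have hcard : #(g +ᵥ X) = #X := Finset.card_vadd_finset g X
  have hcardA : #((g +ᵥ X) + A) = #(X + A) := by
    rw [vadd_add_assoc, Finset.card_vadd_finset]
  have hIU := Finset.card_inter_add_card_union X (g +ᵥ X)
  have hsub : #(X ∩ (g +ᵥ X) + A) + #(X ∪ (g +ᵥ X) + A) ≤ #(X + A) + #((g +ᵥ X) + A) := by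
    rw [← Finset.card_inter_add_card_union (X + A) ((g +ᵥ X) + A), Finset.union_add]
    exact Nat.add_le_add_right (card_le_card Finset.inter_add_subset) _
  have hIX : #(X ∩ (g +ᵥ X)) < #X := by
    apply card_lt_card
    refine ⟨inter_subset_left, fun h => hg ?_⟩
    have h2 : X ⊆ g +ᵥ X := fun x hx => (mem_inter.1 (h hx)).2
    exact (eq_of_subset_of_card_le h2 hcard.le).symm
  have hIA : #(X ∩ (g +ᵥ X) + A) ≤ #(X + A) :=
    card_le_card (Finset.add_subset_add_right inter_subset_left)
  -- the dual of `X`, again a fragment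
  have hdual : #X ≤ Fintype.card G - #(X + A) := by
    have hc : #(-(X + A)ᶜ) = Fintype.card G - #(X + A) := by
      rw [Finset.card_neg, card_compl]
    have hd : #(-(X + A)ᶜ + A) ≤ Fintype.card G - #X := by
      rw [← card_compl, ← Finset.card_neg (s := Xᶜ)]
      apply card_le_card
      intro z hz
      rw [Finset.mem_neg']
      obtain ⟨y, hy, a, ha, rfl⟩ := Finset.mem_add.1 hz
      rw [Finset.mem_neg', mem_compl] at hy
      rw [mem_compl]
      intro h
      apply hy
      have := Finset.add_mem_add h ha
      simpa [neg_add_rev, add_comm, add_assoc] using this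
    have hXc : #X ≤ Fintype.card G := card_le_univ X
    rw [← hc]
    apply hsm <;> omega
  have h5 := hsm (X ∩ (g +ᵥ X)) hI (by omega)
  by_cases hU : #(X ∪ (g +ᵥ X) + A) + r ≤ Fintype.card G
  · have := hbd (X ∪ (g +ᵥ X)) (hXF'.1.trans (card_le_card subset_union_left)) hU
    omega
  · omega


/-! ### Subgroups and cosets as finite sets; Olson's bound -/

open Classical in
/-- The elements of a subgroup of a finite group, as a `Finset`. -/
noncomputable def sgFinset (L : AddSubgroup G) : Finset G := univ.filter (· ∈ L)

@[simp] lemma mem_sgFinset {L : AddSubgroup G} {x : G} : x ∈ sgFinset L ↔ x ∈ L := by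
  simp [sgFinset]

lemma card_sgFinset (L : AddSubgroup G) : #(sgFinset L) = Nat.card L := by
  classical
  rw [Nat.card_eq_fintype_card, Fintype.card_subtype]
  unfold sgFinset
  congr

lemma sgFinset_nonempty (L : AddSubgroup G) : (sgFinset L).Nonempty := ⟨0, by simp⟩

lemma mem_add_sgFinset {L : AddSubgroup G} {A : Finset G} {z : G} :
    z ∈ A + sgFinset L ↔ ∃ a ∈ A, z - a ∈ L := by
  rw [Finset.mem_add]
  constructor
  · rintro ⟨a, ha, b, hb, rfl⟩
    exact ⟨a, ha, by simpa using hb⟩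
  · rintro ⟨a, ha, h⟩
    exact ⟨a, ha, z - a, by simpa using h, by abel⟩

lemma subset_add_sgFinset (L : AddSubgroup G) (A : Finset G) : A ⊆ A + sgFinset L :=
  fun a ha => mem_add_sgFinset.2 ⟨a, ha, by simp⟩

/-- `A` affinely generates `G`: it lies in no coset of a proper subgroup. -/
def AffGen (A : Finset G) : Prop :=
  ∀ P : AddSubgroup G, (∀ x ∈ A, ∀ y ∈ A, x - y ∈ P) → P = ⊤

/-- If `A` meets two distinct cosets of `L`, then `A + L` contains both of them. -/
lemma two_cosets {L : AddSubgroup G} {A : Finset G} {u v : G} (hu : u ∈ A) (hv : v ∈ A)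
    (huv : u - v ∉ L) : 2 * #(sgFinset L) ≤ #(A + sgFinset L) := by
  have hd : Disjoint (u +ᵥ sgFinset L) (v +ᵥ sgFinset L) := by
    rw [Finset.disjoint_left]
    intro z hz hz'
    obtain ⟨p, hp, rfl⟩ := Finset.mem_vadd_finset.1 hz
    obtain ⟨q, hq, h⟩ := Finset.mem_vadd_finset.1 hz'
    simp only [vadd_eq_add, mem_sgFinset] at *
    apply huv
    have : u - v = q - p := by
      rw [sub_eq_sub_iff_add_eq_add, add_comm q v, h]
    rw [this]
    exact L.sub_mem hq hp
  calc 2 * #(sgFinset L) = #((u +ᵥ sgFinset L) ∪ (v +ᵥ sgFinset L)) := by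
        rw [card_union_of_disjoint hd]; simp [two_mul]
    _ ≤ _ := by
        apply card_le_card
        apply union_subset <;> intro z hz <;> obtain ⟨p, hp, rfl⟩ := Finset.mem_vadd_finset.1 hz
        · exact Finset.add_mem_add hu hp
        · exact Finset.add_mem_add hv hp

/-- A set stabilised by all differences of its elements is a coset of its stabiliser. -/
lemma coset_of_translates {X : Finset G} (hX : X.Nonempty)
    (h : ∀ x ∈ X, ∀ y ∈ X, (y - x) +ᵥ X = X) :
    ∃ (P : AddSubgroup G) (x₀ : G), X = x₀ +ᵥ sgFinset P := by
  obtain ⟨x₀, hx₀⟩ := hX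
  refine ⟨AddAction.stabilizer G X, x₀, ?_⟩
  ext y
  rw [Finset.mem_vadd_finset]
  constructor
  · intro hy
    exact ⟨y - x₀, by simpa [AddAction.mem_stabilizer_iff] using h x₀ hx₀ y hy, by simp⟩
  · rintro ⟨p, hp, rfl⟩
    rw [mem_sgFinset, AddAction.mem_stabilizer_iff] at hp
    rw [← hp, Finset.mem_vadd_finset]
    exact ⟨x₀, hx₀, by simp [add_comm]⟩

lemma card_coset_add (P : AddSubgroup G) (x₀ : G) (A : Finset G) :
    #((x₀ +ᵥ sgFinset P) + A) = #(A + sgFinset P) := by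
  rw [vadd_add_assoc, Finset.card_vadd_finset, add_comm]

/-- Olson's bound `|X + B| ≥ |X| + |B|/2` for `X + B ≠ G` and `B` contained in no coset of a proper
subgroup. A `1`-atom of `B` is a coset of a subgroup `P`, and `B` meets at least two cosets of `P`. -/
lemma olson {B X : Finset G} (hB : AffGen B) (hBne : B.Nonempty) (hX : X.Nonempty)
    (h : #(X + B) < Fintype.card G) : 2 * #X + #B ≤ 2 * #(X + B) := by
  obtain ⟨Y, hY1, hY2, hY3, hY4⟩ := exists_atom 1 B hBne ⟨X, hX.card_pos, h⟩
  have hYne : Y.Nonempty := card_pos.1 hY1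
  obtain ⟨P, x₀, rfl⟩ := coset_of_translates hYne (by
    intro x hx y hy
    by_contra hne
    have h0 := hY4 _ hne
    have : y ∈ Y ∩ ((y - x) +ᵥ Y) :=
      mem_inter.2 ⟨hy, Finset.mem_vadd_finset.2 ⟨x, hx, by simp⟩⟩
    have := card_pos.2 ⟨y, this⟩
    omega)
  have hXmin := hY3 X hX.card_pos h
  rw [card_coset_add, Finset.card_vadd_finset] at hXmin
  rw [card_coset_add] at hY2
  have hBP : #B ≤ #(B + sgFinset P) := card_le_card (subset_add_sgFinset P B)
  have hex : ∃ u ∈ B, ∃ v ∈ B, u - v ∉ P := by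
    by_contra hcon
    push Not at hcon
    have htop := hB P hcon
    obtain ⟨b, hb⟩ := hBne
    have : B + sgFinset P = univ := by
      ext z
      simp only [mem_add_sgFinset, mem_univ, iff_true]
      exact ⟨b, hb, by simp [htop]⟩
    rw [this, card_univ] at hY2
    omega
  obtain ⟨u, hu, v, hv, huv⟩ := hex
  have := two_cosets hu hv huv
  omega

/-- The subgroup generated by the differences of elements of `A`: the smallest subgroup `L` such
that `A` lies in a single coset of `L`. -/
def diffGroup (A : Finset G) : AddSubgroup G :=
  AddSubgroup.closure {z | ∃ x ∈ A, ∃ y ∈ A, x - y = z}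

lemma sub_mem_diffGroup {A : Finset G} {x y : G} (hx : x ∈ A) (hy : y ∈ A) :
    x - y ∈ diffGroup A := AddSubgroup.subset_closure ⟨x, hx, y, hy, rfl⟩

lemma diffGroup_le {A : Finset G} {P : AddSubgroup G} (h : ∀ x ∈ A, ∀ y ∈ A, x - y ∈ P) :
    diffGroup A ≤ P := by
  unfold diffGroup
  rw [AddSubgroup.closure_le]
  rintro z ⟨x, hx, y, hy, rfl⟩
  exact h x hx y hy

lemma affGen_iff {A : Finset G} : AffGen A ↔ diffGroup A = ⊤ := by
  constructor
  · exact fun h => h _ fun x hx y hy => sub_mem_diffGroup hx hy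
  · exact fun h P hP => top_le_iff.1 (h ▸ diffGroup_le hP)

/-- Olson's bound relative to the coset of `diffGroup B` spanned by `B`, obtained by translating
`X` and `B` into `diffGroup B`. -/
lemma olson_coset {B X : Finset G} (hBne : B.Nonempty) (hX : X.Nonempty)
    (hXL : ∀ x ∈ X, ∀ y ∈ X, x - y ∈ diffGroup B)
    (h : #(X + B) < #(sgFinset (diffGroup B))) : 2 * #X + #B ≤ 2 * #(X + B) := by
  classical
  set L := diffGroup B with hL
  -- coordinates on the coset through `x`
  have key : ∀ (S : Finset G) (x : G), (∀ y ∈ S, y - x ∈ L) →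
      ∃ S' : Finset L, S'.image (fun z : L => x + (z : G)) = S := by
    intro S x hS
    refine ⟨univ.filter (fun z : L => x + (z : G) ∈ S), ?_⟩
    ext y
    simp only [mem_image, mem_filter, mem_univ, true_and]
    constructor
    · rintro ⟨z, hz, rfl⟩; exact hz
    · intro hy
      exact ⟨⟨y - x, hS y hy⟩, by simpa using hy, by simp⟩
  have hinj : ∀ x : G, Function.Injective (fun z : L => x + (z : G)) := by
    intro x a b hab
    exact Subtype.ext (add_left_cancel hab)
  obtain ⟨b, hb⟩ := hBne
  obtain ⟨x, hx⟩ := hX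
  obtain ⟨B', hB'⟩ := key B b fun y hy => sub_mem_diffGroup hy hb
  obtain ⟨X', hX'⟩ := key X x fun y hy => hXL y hy x hx
  have hcB : #B = #B' := by rw [← hB', card_image_of_injective _ (hinj b)]
  have hcX : #X = #X' := by rw [← hX', card_image_of_injective _ (hinj x)]
  have hXB : (X' + B').image (fun z : L => (x + b) + (z : G)) = X + B := by
    rw [← hX', ← hB']
    ext y
    simp only [mem_image, Finset.mem_add]
    constructor
    · rintro ⟨_, ⟨p, hp, q, hq, rfl⟩, rfl⟩
      exact ⟨_, ⟨p, hp, rfl⟩, _, ⟨q, hq, rfl⟩, by push_cast; abel⟩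
    · rintro ⟨_, ⟨p, hp, rfl⟩, _, ⟨q, hq, rfl⟩, rfl⟩
      exact ⟨_, ⟨p, hp, q, hq, rfl⟩, by push_cast; abel⟩
  have hcXB : #(X + B) = #(X' + B') := by rw [← hXB, card_image_of_injective _ (hinj _)]
  have hB'ne : B'.Nonempty := by
    rw [← card_pos, ← hcB]; exact card_pos.2 ⟨b, hb⟩
  have hX'ne : X'.Nonempty := by
    rw [← card_pos, ← hcX]; exact card_pos.2 ⟨x, hx⟩
  rw [hcB, hcX, hcXB]
  refine olson ?_ hB'ne hX'ne ?_
  · intro P hP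
    have hle : L ≤ P.map L.subtype := by
      apply diffGroup_le
      intro y hy z hz
      rw [← hB'] at hy hz
      obtain ⟨p, hp, rfl⟩ := mem_image.1 hy
      obtain ⟨q, hq, rfl⟩ := mem_image.1 hz
      exact ⟨p - q, hP p hp q hq, by simp⟩
    rw [eq_top_iff]
    rintro ⟨z, hz⟩ -
    obtain ⟨w, hw, hwz⟩ := hle hz
    have : w = ⟨z, hz⟩ := Subtype.ext hwz
    exact this ▸ hw
  · rw [← hcXB, ← Nat.card_eq_fintype_card, ← card_sgFinset]
    exact h

/-! ### Sets with small sumsets are almost periodic -/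

/-- If `|X + A| < |X| + |A|` and `Q` is the subgroup generated by the differences of `X`, then `A`
misses fewer than `|Q|` elements of `A + Q`. Split `A` along the cosets of `Q`: by Olson's bound,
each coset not filled by `X + A` costs at least `|X|/2`, so at most one coset is not filled. -/
lemma almost_full_of_diffGroup {X A : Finset G} (hX : X.Nonempty) (hA : A.Nonempty)
    (h : #(X + A) + 1 ≤ #X + #A) :
    #(A + sgFinset (diffGroup X)) + 1 ≤ #A + #(sgFinset (diffGroup X)) := by
  classical
  set Q := diffGroup X with hQ
  set q := #(sgFinset Q) with hq
  set π : G → G ⧸ Q := fun z => (z : G ⧸ Q) with hπ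
  set I := A.image π with hI
  set B : G ⧸ Q → Finset G := fun i => A.filter (fun a => π a = i) with hB
  have hBne : ∀ i ∈ I, (B i).Nonempty := by
    intro i hi
    obtain ⟨a, ha, rfl⟩ := mem_image.1 hi
    exact ⟨a, by simp [hB, ha]⟩
  have hdiff : ∀ i, ∀ x ∈ B i, ∀ y ∈ B i, x - y ∈ Q := by
    intro i x hx y hy
    simp only [hB, mem_filter, hπ] at hx hy
    have := QuotientAddGroup.eq.1 (hy.2.trans hx.2.symm)
    rwa [neg_add_eq_sub] at this
  have hA' : #A = ∑ i ∈ I, #(B i) := card_eq_sum_card_image π A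
  have hXA : #(X + A) = ∑ i ∈ I, #(X + B i) := by
    rw [← card_biUnion]
    · congr 1
      ext z
      simp only [mem_biUnion, Finset.mem_add]
      constructor
      · rintro ⟨x, hx, a, ha, rfl⟩
        exact ⟨π a, mem_image_of_mem _ ha, x, hx, a, by simp [hB, ha], rfl⟩
      · rintro ⟨i, hi, x, hx, a, ha, rfl⟩
        exact ⟨x, hx, a, (mem_filter.1 ha).1, rfl⟩
    · intro i hi j hj hij
      simp only [Function.onFun]
      rw [Finset.disjoint_left]
      intro z hz hz'
      obtain ⟨x, hx, a, ha, rfl⟩ := Finset.mem_add.1 hz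
      obtain ⟨y, hy, b, hb, hzz⟩ := Finset.mem_add.1 hz'
      apply hij
      rw [← (mem_filter.1 ha).2, ← (mem_filter.1 hb).2]
      apply QuotientAddGroup.eq.2
      have : -a + b = x - y := by
        rw [neg_add_eq_sub, sub_eq_sub_iff_add_eq_add, add_comm b y, hzz]
      rw [this]
      exact sub_mem_diffGroup hx hy
  have hAQ : #(A + sgFinset Q) ≤ ∑ i ∈ I, q := by
    refine le_trans (card_le_card (t := I.biUnion fun i => B i + sgFinset Q) ?_)
      (card_biUnion_le.trans (sum_le_sum ?_))
    · intro z hz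
      obtain ⟨a, ha, b, hb, rfl⟩ := Finset.mem_add.1 hz
      exact mem_biUnion.2 ⟨π a, mem_image_of_mem _ ha,
        Finset.add_mem_add (by simp [hB, ha]) hb⟩
    · intro i hi
      obtain ⟨a, ha⟩ := hBne i hi
      rw [hq, ← Finset.card_vadd_finset a (sgFinset Q)]
      apply card_le_card
      intro z hz
      obtain ⟨b, hb, hzb⟩ := mem_add_sgFinset.1 hz
      refine Finset.mem_vadd_finset.2 ⟨z - a, ?_, by simp⟩
      rw [mem_sgFinset]
      have := Q.add_mem hzb (hdiff i b hb a ha)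
      simpa using this
  have hle : ∀ i, #(B i) ≤ #(X + B i) := fun i => Finset.card_le_card_add_left hX
  have hleX : ∀ i ∈ I, #X ≤ #(X + B i) := fun i hi => Finset.card_le_card_add_right (hBne i hi)
  have hols : ∀ i ∈ I, #(X + B i) < q → 2 * #(B i) + #X ≤ 2 * #(X + B i) := by
    intro i hi hlt
    rw [add_comm X] at hlt ⊢
    exact olson_coset hX (hBne i hi) (hdiff i) hlt
  -- at most one coset is not filled by `X + A`
  have hone : ∃ j ∈ I, ∀ i ∈ I, i ≠ j → q ≤ #(X + B i) := by
    by_contra hcon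
    push Not at hcon
    obtain ⟨i₀, hi₀⟩ : I.Nonempty := hA.image π
    obtain ⟨i, hi, -, hiq⟩ := hcon i₀ hi₀
    obtain ⟨j, hj, hji, hjq⟩ := hcon i hi
    have h1 := hols i hi hiq
    have h2 := hols j hj hjq
    rw [hXA, hA', ← add_sum_erase I _ hi, ← add_sum_erase I (fun i => #(B i)) hi,
      ← add_sum_erase (I.erase i) _ (mem_erase.2 ⟨hji, hj⟩),
      ← add_sum_erase (I.erase i) (fun i => #(B i)) (mem_erase.2 ⟨hji, hj⟩)] at h
    have h3 : ∑ x ∈ (I.erase i).erase j, #(B x) ≤ ∑ x ∈ (I.erase i).erase j, #(X + B x) :=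
      sum_le_sum fun x _ => hle x
    omega
  obtain ⟨j, hj, hfull⟩ := hone
  have h4 : ∑ i ∈ I.erase j, q ≤ ∑ i ∈ I.erase j, #(X + B i) :=
    sum_le_sum fun i hi => hfull i (mem_of_mem_erase hi) (ne_of_mem_erase hi)
  have h5 := hleX j hj
  rw [← add_sum_erase I _ hj] at hXA hAQ
  omega

/-- Distinct translates of a set with Sidon-type intersections share at most one point. -/
lemma sidon_union {X : Finset G} (hS : ∀ g : G, g ≠ 0 → #(X ∩ (g +ᵥ X)) < 2) {a b : G}
    (hab : a ≠ b) : #((a +ᵥ X) ∩ (b +ᵥ X)) ≤ 1 := by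
  have h := hS (b - a) (sub_ne_zero.2 hab.symm)
  have h2 : a +ᵥ (X ∩ ((b - a) +ᵥ X)) = (a +ᵥ X) ∩ (b +ᵥ X) := by
    rw [Finset.vadd_finset_inter, vadd_vadd, add_sub_cancel]
  rw [← h2, Finset.card_vadd_finset]
  omega

/-- If `A` generates affinely and `|X + A| < |X| + |A|` for some nondegenerate `X`, then either `A` is
almost a union of cosets of a nontrivial proper subgroup, or `A` is almost invariant under the
translation by some `r ≠ 0`. Consider a `2`-atom `X`. A periodic atom is a coset; an atom with two
elements gives `r`; an atom that does not generate affinely is handled by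
`almost_full_of_diffGroup`. Otherwise `X` is a Sidon-type set with `|X| < |A|`, and the statement
for `X`, with `A` as the witness of small growth, contradicts `|X ∪ (g + X)| ≥ 2|X| - 1`. -/
lemma critical_pair (n : ℕ) : ∀ A : Finset G, #A = n → AffGen A → 2 ≤ #A →
    (∃ X : Finset G, 2 ≤ #X ∧ #(X + A) + 2 ≤ Fintype.card G ∧ #(X + A) + 1 ≤ #X + #A) →
    (∃ L : AddSubgroup G, L ≠ ⊥ ∧ L ≠ ⊤ ∧ #(A + sgFinset L) + 1 ≤ #A + #(sgFinset L)) ∨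
      ∃ r : G, r ≠ 0 ∧ #(A ∪ (r +ᵥ A)) ≤ #A + 1 := by
  induction n using Nat.strong_induction_on with
  | _ n ih =>
  intro A hn hgen hA2 hex
  have hAne : A.Nonempty := card_pos.1 (by omega)
  obtain ⟨Z, hZ1, hZ2, hZ3⟩ := hex
  obtain ⟨X, hX1, hX2, hX3, hX4⟩ := exists_atom 2 A hAne ⟨Z, hZ1, hZ2⟩
  have hXne : X.Nonempty := card_pos.1 (by omega)
  have hXA : #(X + A) + 1 ≤ #X + #A := by
    have := hX3 Z hZ1 hZ2
    omega
  by_cases hper : ∃ g : G, g ≠ 0 ∧ g +ᵥ X = X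
  · -- a periodic 2-atom is a coset
    obtain ⟨g, hg0, hg⟩ := hper
    obtain ⟨P, x₀, rfl⟩ := coset_of_translates hXne (by
      intro x hx y hy
      by_contra hne
      have h0 := hX4 _ hne
      have hy1 : y ∈ X ∩ ((y - x) +ᵥ X) :=
        mem_inter.2 ⟨hy, Finset.mem_vadd_finset.2 ⟨x, hx, by simp⟩⟩
      have hy2 : g + y ∈ X ∩ ((y - x) +ᵥ X) := by
        have : g +ᵥ (X ∩ ((y - x) +ᵥ X)) = X ∩ ((y - x) +ᵥ X) := by
          rw [Finset.vadd_finset_inter, vadd_comm g, hg]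
        rw [← this]
        exact Finset.mem_vadd_finset.2 ⟨y, hy1, rfl⟩
      have : 1 < #(X ∩ ((y - x) +ᵥ X)) :=
        one_lt_card.2 ⟨y, hy1, g + y, hy2, by simpa using hg0⟩
      omega)
    rw [card_coset_add, Finset.card_vadd_finset] at hXA
    rw [card_coset_add] at hX2
    rw [Finset.card_vadd_finset] at hX1
    refine Or.inl ⟨P, ?_, ?_, by omega⟩
    · rintro rfl
      rw [card_sgFinset] at hX1
      simp at hX1
    · rintro rfl
      have : A + sgFinset (⊤ : AddSubgroup G) = univ := by
        obtain ⟨a, ha⟩ := hAne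
        ext z
        simp only [mem_add_sgFinset, mem_univ, iff_true]
        exact ⟨a, ha, by simp⟩
      rw [this, card_univ] at hX2
      omega
  have hS : ∀ g : G, g ≠ 0 → #(X ∩ (g +ᵥ X)) < 2 := fun g hg =>
    hX4 g fun h => hper ⟨g, hg, h⟩
  have hun : ∀ a b : G, a ≠ b → 2 * #X ≤ #((a +ᵥ X) ∪ (b +ᵥ X)) + 1 := by
    intro a b hab
    have h1 := sidon_union hS hab
    have h2 := card_inter_add_card_union (a +ᵥ X) (b +ᵥ X)
    simp only [Finset.card_vadd_finset] at h2
    omega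
  have hsubX : ∀ a ∈ A, a +ᵥ X ⊆ X + A := by
    intro a ha z hz
    obtain ⟨x, hx, rfl⟩ := Finset.mem_vadd_finset.1 hz
    exact Finset.mem_add.2 ⟨x, hx, a, ha, by simp [add_comm]⟩
  rcases hX1.eq_or_lt with hx2 | hx3
  · -- a 2-atom with two elements
    obtain ⟨u, v, huv, rfl⟩ := card_eq_two.1 hx2.symm
    refine Or.inr ⟨v - u, sub_ne_zero.2 huv.symm, ?_⟩
    have : u +ᵥ (A ∪ ((v - u) +ᵥ A)) ⊆ {u, v} + A := by
      intro z hz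
      rw [Finset.vadd_finset_union, vadd_vadd, add_sub_cancel] at hz
      rcases mem_union.1 hz with hz | hz <;> obtain ⟨a, ha, rfl⟩ := Finset.mem_vadd_finset.1 hz
      · exact Finset.add_mem_add (by simp) ha
      · exact Finset.add_mem_add (by simp) ha
    have := card_le_card this
    rw [Finset.card_vadd_finset] at this
    omega
  by_cases hQ : diffGroup X = ⊤
  swap
  · refine Or.inl ⟨diffGroup X, ?_, hQ, almost_full_of_diffGroup hXne hAne hXA⟩
    intro hbot
    obtain ⟨u, hu, v, hv, huv⟩ := one_lt_card.1 (show 1 < #X by omega)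
    have := sub_mem_diffGroup hu hv
    rw [hbot, AddSubgroup.mem_bot, sub_eq_zero] at this
    exact huv this
  exfalso
  have hlt : #X < #A := by
    by_contra hge
    push Not at hge
    rcases hA2.eq_or_lt with ha2 | ha3
    · obtain ⟨a, ha, b, hb, hab⟩ := one_lt_card.1 (show 1 < #A by omega)
      have h1 := hun a b hab
      have h2 := card_le_card (union_subset (hsubX a ha) (hsubX b hb))
      omega
    · obtain ⟨a, ha, b, hb, c, hc, hab, hac, hbc⟩ := two_lt_card.1 ha3
      have h1 := hun a b hab
      have h2 := card_le_card (union_subset (union_subset (hsubX a ha) (hsubX b hb)) (hsubX c hc))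
      have h3 := card_inter_add_card_union ((a +ᵥ X) ∪ (b +ᵥ X)) (c +ᵥ X)
      have h4 : #(((a +ᵥ X) ∪ (b +ᵥ X)) ∩ (c +ᵥ X)) ≤ 2 := by
        rw [union_inter_distrib_right]
        have := sidon_union hS hac
        have := sidon_union hS hbc
        exact (card_union_le _ _).trans (by omega)
      rw [Finset.card_vadd_finset] at h3
      omega
  rcases ih #X (by omega) X rfl (affGen_iff.2 hQ) hX1
    ⟨A, hA2, by rwa [add_comm A], by rw [add_comm A]; omega⟩ with ⟨L, hLb, hLt, hL⟩ | ⟨r, hr, hrX⟩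
  · obtain ⟨g, hgL, hg0⟩ := L.bot_or_exists_ne_zero.resolve_left hLb
    have h1 := hun 0 g hg0.symm
    have h2 : ((0 : G) +ᵥ X) ∪ (g +ᵥ X) ⊆ X + sgFinset L := by
      rw [zero_vadd]
      refine union_subset (subset_add_sgFinset L X) fun z hz => ?_
      obtain ⟨x, hx, rfl⟩ := Finset.mem_vadd_finset.1 hz
      exact mem_add_sgFinset.2 ⟨x, hx, by simpa using hgL⟩
    have h3 := card_le_card h2
    have hex : ∃ u ∈ X, ∃ v ∈ X, u - v ∉ L := by
      by_contra hcon
      push Not at hcon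
      exact hLt (affGen_iff.2 hQ L hcon)
    obtain ⟨u, hu, v, hv, huv⟩ := hex
    have h4 := two_cosets hu hv huv
    omega
  · have h1 := hun 0 r hr.symm
    rw [zero_vadd] at h1
    omega

/-- A set gaining at most one point from the translation by `r` is a union of `⟨r⟩`-cosets and at
most one arithmetic progression of difference `r`, so it misses fewer than `|⟨r⟩|` elements of
`A + ⟨r⟩`. -/
lemma almost_full_zmultiples {A : Finset G} {r : G}
    (h : #(A ∪ (r +ᵥ A)) ≤ #A + 1) :
    #(A + sgFinset (AddSubgroup.zmultiples r)) + 1 ≤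
      #A + #(sgFinset (AddSubgroup.zmultiples r)) := by
  classical
  set L := AddSubgroup.zmultiples r with hL
  have hclosed : ∀ T : Finset G, (∀ z ∈ T, z + r ∈ T) → A ⊆ T → A + sgFinset L ⊆ T := by
    intro T hT hAT z hz
    obtain ⟨a, ha, b, hb, rfl⟩ := Finset.mem_add.1 hz
    rw [mem_sgFinset, hL, mem_zmultiples_iff_mem_range_addOrderOf] at hb
    obtain ⟨m, -, rfl⟩ := mem_image.1 hb
    clear hz hb
    induction m with
    | zero => simpa using hAT ha
    | succ m ihm =>
      have := hT _ ihm
      rwa [succ_nsmul, ← add_assoc]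
  have hpos : 0 < #(sgFinset L) := (sgFinset_nonempty L).card_pos
  by_cases hsub : r +ᵥ A ⊆ A
  · have := card_le_card (hclosed A (fun z hz => hsub
      (Finset.mem_vadd_finset.2 ⟨z, hz, by simp [add_comm]⟩)) (Subset.refl A))
    omega
  · obtain ⟨y, hy, hyA⟩ := not_subset.1 hsub
    obtain ⟨a, ha, rfl⟩ := Finset.mem_vadd_finset.1 hy
    have hU : A ∪ (r +ᵥ A) = insert (r +ᵥ a) A := by
      symm
      apply eq_of_subset_of_card_le
      · exact insert_subset (mem_union_right _ hy) subset_union_left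
      · rw [card_insert_of_notMem hyA]; exact h
    have hsub2 : A + sgFinset L ⊆ A ∪ ((a +ᵥ sgFinset L).erase a) := by
      have h1 : A + sgFinset L ⊆ A ∪ (a +ᵥ sgFinset L) := by
        apply hclosed _ _ subset_union_left
        intro z hz
        rcases mem_union.1 hz with hz | hz
        · have : z + r ∈ A ∪ (r +ᵥ A) :=
            mem_union_right _ (Finset.mem_vadd_finset.2 ⟨z, hz, by simp [add_comm]⟩)
          rw [hU, mem_insert] at this
          rcases this with h | h
          · exact mem_union_right _ (Finset.mem_vadd_finset.2
              ⟨r, by simp [hL], by rw [h]; simp [add_comm]⟩)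
          · exact mem_union_left _ h
        · obtain ⟨w, hw, rfl⟩ := Finset.mem_vadd_finset.1 hz
          rw [mem_sgFinset] at hw
          exact mem_union_right _ (Finset.mem_vadd_finset.2
            ⟨w + r, by rw [mem_sgFinset]; exact L.add_mem hw (by simp [hL]),
              by simp [add_assoc]⟩)
      intro z hz
      rcases mem_union.1 (h1 hz) with hz | hz
      · exact mem_union_left _ hz
      · by_cases hza : z = a
        · exact mem_union_left _ (hza ▸ ha)
        · exact mem_union_right _ (mem_erase.2 ⟨hza, hz⟩)
    have h2 := (card_le_card hsub2).trans (card_union_le _ _)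
    rw [card_erase_of_mem (Finset.mem_vadd_finset.2 ⟨0, by simp, by simp⟩),
      Finset.card_vadd_finset] at h2
    omega

/-- If `A` misses fewer than `|L|` elements of `A + L`, then any two distinct cosets of `L`
met by `A` contain points of `A` with any prescribed compatible difference. -/
lemma exists_sub_eq {L : AddSubgroup G} {A : Finset G}
    (h : #(A + sgFinset L) + 1 ≤ #A + #(sgFinset L)) {u v t : G} (hu : u ∈ A) (hv : v ∈ A)
    (huv : u - v ∉ L) (ht : t - (u - v) ∈ L) : ∃ u' ∈ A, ∃ v' ∈ A, u' - v' = t := by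
  classical
  by_contra hcon
  push Not at hcon
  -- an injection of `L` into the complement of `A` in `A + L`
  set f : G → G := fun w => if u + w ∈ A then u + w - t else u + w with hf
  have hmaps : Set.MapsTo f (sgFinset L) ((A + sgFinset L) \ A : Finset G) := by
    intro w hw
    simp only [coe_sdiff, Set.mem_sdiff, mem_coe, mem_sgFinset] at hw ⊢
    by_cases hA : u + w ∈ A
    · simp only [hf, hA, if_true]
      refine ⟨mem_add_sgFinset.2 ⟨v, hv, ?_⟩, fun h' => hcon _ hA _ h' (by abel)⟩
      have : u + w - t - v = w - (t - (u - v)) := by abel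
      rw [this]
      exact L.sub_mem hw ht
    · simp only [hf, hA, if_false]
      exact ⟨mem_add_sgFinset.2 ⟨u, hu, by simpa using hw⟩, not_false⟩
  have hsep : ∀ w ∈ L, ∀ w' ∈ L, u + w - t ≠ u + w' := by
    intro w hw w' hw' he
    apply huv
    have : u - v = w - w' - (t - (u - v)) := by
      have h2 : t = w - w' := by
        rw [eq_sub_iff_add_eq]
        have := congrArg (fun z => z - u + t) he
        rw [show u + w - t - u + t = w by abel, show u + w' - u + t = t + w' by abel] at this
        exact this.symm
      rw [h2]; abel
    rw [this]
    exact L.sub_mem (L.sub_mem hw hw') ht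
  have hinj : Set.InjOn f (sgFinset L) := by
    intro w hw w' hw' he
    simp only [mem_coe, mem_sgFinset] at hw hw'
    simp only [hf] at he
    split_ifs at he
    · simpa using he
    · exact absurd he (hsep w hw w' hw')
    · exact absurd he.symm (hsep w' hw' w hw)
    · simpa using he
  have h1 := card_le_card_of_injOn f hmaps hinj
  rw [card_sdiff_of_subset (subset_add_sgFinset L A)] at h1
  have h2 := card_le_card (subset_add_sgFinset L A)
  have hpos : 0 < #(sgFinset L) := (sgFinset_nonempty L).card_pos
  omega

end Isoperimetric

/-! ### Iterated sumsets and `mu` -/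

section FoldSum

variable {G : Type*} [AddCommGroup G] [DecidableEq G]

lemma foldSum_nonempty {A : Finset G} (hA : A.Nonempty) (n : ℕ) : (foldSum n A).Nonempty := by
  induction n with
  | zero => exact ⟨0, by simp [foldSum]⟩
  | succ n ih => exact hA.add ih

lemma foldSum_succ' (n : ℕ) (A : Finset G) : foldSum (n + 1) A = foldSum n A + A := by
  rw [foldSum, add_comm]

lemma foldSum_one (A : Finset G) : foldSum 1 A = A := by
  simp [foldSum, Finset.add_singleton]

lemma map_mem_foldSum {K : Type*} [AddCommGroup K] [DecidableEq K] (f : G →+ K)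
    {A : Finset G} {B : Finset K} (h : ∀ a ∈ A, f a ∈ B) (n : ℕ) :
    ∀ z ∈ foldSum n A, f z ∈ foldSum n B := by
  induction n with
  | zero => simp [foldSum]
  | succ n ih =>
    intro z hz
    obtain ⟨a, ha, w, hw, rfl⟩ := Finset.mem_add.1 hz
    rw [map_add]
    exact Finset.add_mem_add (h a ha) (ih w hw)

lemma KLSumFree.comap {K : Type*} [AddCommGroup K] [DecidableEq K] (f : G →+ K) {k l : ℕ}
    {A : Finset G} {B : Finset K} (h : ∀ a ∈ A, f a ∈ B) (hB : KLSumFree k l B) :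
    KLSumFree k l A :=
  Finset.disjoint_left.2 fun z hz hz' =>
    Finset.disjoint_left.1 hB (map_mem_foldSum f h k z hz) (map_mem_foldSum f h l z hz')

lemma foldSum_image {K : Type*} [AddCommGroup K] [DecidableEq K] (f : G →+ K)
    (A : Finset G) (n : ℕ) : foldSum n (A.image f) = (foldSum n A).image f := by
  induction n with
  | zero => simp [foldSum]
  | succ n ih => rw [foldSum, foldSum, ih, Finset.image_add]

/-- All elements of an iterated sumset are congruent modulo the differences of `A`. -/
lemma sub_mem_of_foldSum {A : Finset G} {L : AddSubgroup G} (h : ∀ x ∈ A, ∀ y ∈ A, x - y ∈ L)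
    (n : ℕ) : ∀ x ∈ foldSum n A, ∀ y ∈ foldSum n A, x - y ∈ L := by
  induction n with
  | zero => simp [foldSum]
  | succ n ih =>
    intro x hx y hy
    obtain ⟨a, ha, w, hw, rfl⟩ := Finset.mem_add.1 hx
    obtain ⟨b, hb, v, hv, rfl⟩ := Finset.mem_add.1 hy
    rw [add_sub_add_comm]
    exact L.add_mem (h a ha b hb) (ih w hw v hv)

variable [Fintype G]

lemma bddAbove_sumFree_cards (k l : ℕ) :
    BddAbove {m | ∃ A : Finset G, KLSumFree k l A ∧ A.card = m} :=
  ⟨Fintype.card G, by rintro m ⟨A, -, rfl⟩; exact card_le_univ A⟩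

lemma card_le_mu {k l : ℕ} {A : Finset G} (h : KLSumFree k l A) : #A ≤ mu G k l :=
  le_csSup (bddAbove_sumFree_cards k l) ⟨A, h, rfl⟩

lemma exists_card_eq_mu {k : ℕ} (l : ℕ) (hk : 0 < k) :
    ∃ A : Finset G, KLSumFree k l A ∧ #A = mu G k l := by
  refine Nat.sSup_mem (s := {m | ∃ A : Finset G, KLSumFree k l A ∧ A.card = m})
    ⟨0, ∅, ?_, rfl⟩ (bddAbove_sumFree_cards k l)
  obtain ⟨j, rfl⟩ := Nat.exists_eq_succ_of_ne_zero hk.ne'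
  simp [KLSumFree, foldSum]

/-- Preimages under a surjective homomorphism preserve density. -/
lemma card_preimage_mul {C : Type*} [AddCommGroup C] [Fintype C] [DecidableEq C]
    (f : G →+ C) (hf : Function.Surjective f) (B : Finset C) :
    #(univ.filter fun g => f g ∈ B) * Fintype.card C = #B * Fintype.card G := by
  have key : ∀ B : Finset C, #(univ.filter fun g => f g ∈ B) = #B * #(sgFinset f.ker) := by
    intro B
    rw [card_eq_sum_card_fiberwise (f := f) (t := B) (by intro g; simp), ← smul_eq_mul,
      ← sum_const]
    refine sum_congr rfl fun b hb => ?_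
    obtain ⟨g₀, rfl⟩ := hf b
    rw [← Finset.card_vadd_finset g₀ (sgFinset f.ker)]
    congr 1
    ext g
    simp only [mem_filter, mem_univ, true_and, Finset.mem_vadd_finset, mem_sgFinset,
      AddMonoidHom.mem_ker, vadd_eq_add]
    constructor
    · rintro ⟨-, h⟩
      exact ⟨g - g₀, by simp [h], by simp⟩
    · rintro ⟨w, hw, rfl⟩
      simp [hw, hb]
  have huniv := key univ
  simp only [mem_univ, filter_true, card_univ] at huniv
  rw [key, huniv]
  ring

/-- The maximal density of a sum-free set in a quotient is at most that in the group. -/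
lemma mu_mul_card_le {C : Type*} [AddCommGroup C] [Fintype C] [DecidableEq C] {k : ℕ} (l : ℕ)
    (hk : 0 < k) (f : G →+ C) (hf : Function.Surjective f) :
    mu C k l * Fintype.card G ≤ mu G k l * Fintype.card C := by
  obtain ⟨B, hB, hBc⟩ := exists_card_eq_mu (G := C) l hk
  rw [← hBc, ← card_preimage_mul f hf B]
  exact Nat.mul_le_mul_right _ (card_le_mu (hB.comap f (by simp)))

end FoldSum

/-! ### Cyclic groups -/

section Zmod

lemma zmod_mu_mono {d e k : ℕ} (l : ℕ) (hk : 0 < k) [NeZero d] [NeZero e] (hde : d ∣ e) :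
    mu (ZMod d) k l * e ≤ mu (ZMod e) k l * d := by
  have := mu_mul_card_le l hk (ZMod.castHom hde (ZMod d)).toAddMonoidHom
    (ZMod.castHom_surjective hde)
  simpa [ZMod.card] using this

lemma mem_foldSum_interval {d c : ℕ} (a : ZMod d) (n : ℕ) :
    ∀ z ∈ foldSum n ((range c).image fun i : ℕ => a + (i : ZMod d)),
      ∃ u : ℕ, u ≤ n * (c - 1) ∧ z = n * a + u := by
  induction n with
  | zero => intro z hz; exact ⟨0, by simp, by simpa [foldSum] using hz⟩
  | succ n ih =>
    intro z hz
    obtain ⟨x, hx, w, hw, rfl⟩ := Finset.mem_add.1 hz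
    obtain ⟨i, hi, rfl⟩ := mem_image.1 hx
    obtain ⟨u, hu, rfl⟩ := ih w hw
    rw [mem_range] at hi
    refine ⟨i + u, ?_, by push_cast; ring⟩
    rw [add_mul, one_mul]
    omega

/-- An interval of `⌈(d - δ) / (k + l)⌉` consecutive elements of `ZMod d`, where
`δ = gcd(d, k - l)`, is sum-free in a suitable position. The hypothesis on `d` ensures that
this length is at least `d / (k + l)`. -/
lemma interval_bound {d k l : ℕ} (hl : 0 < l) (hkl : l < k) [NeZero d]
    (hd : ∀ j : ℕ, 1 ≤ j → j ≤ Nat.gcd d (k - l) → ¬ d ≡ j [MOD k + l]) :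
    d ≤ (k + l) * mu (ZMod d) k l := by
  set δ := Nat.gcd d (k - l) with hδ
  have hd0 : 0 < d := Nat.pos_of_ne_zero (NeZero.ne d)
  have hδ0 : 0 < δ := Nat.gcd_pos_of_pos_left _ hd0
  have hδd : δ < d := by
    refine lt_of_le_of_ne (Nat.le_of_dvd hd0 (Nat.gcd_dvd_left _ _)) fun h => ?_
    exact hd d (by omega) h.ge rfl
  -- `c = ⌈(d - δ) / (k + l)⌉`
  obtain ⟨b, hb1, hb2⟩ : ∃ b, (k + l) * b < d - δ ∧ d - δ ≤ (k + l) * (b + 1) := by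
    refine ⟨(d - δ - 1) / (k + l), ?_, ?_⟩
    · have := Nat.mul_div_le (d - δ - 1) (k + l)
      omega
    · have := Nat.lt_mul_div_succ (d - δ - 1) (show 0 < k + l by omega)
      omega
  have hcd : d ≤ (k + l) * (b + 1) := by
    by_contra hlt
    push Not at hlt
    refine hd (d - (k + l) * (b + 1)) (by omega) (by omega) ?_
    have : d = (d - (k + l) * (b + 1)) + (k + l) * (b + 1) := by omega
    conv_lhs => rw [this]
    simp [Nat.ModEq]
  -- the first term `a` is chosen with `(k - l) a = w` modulo `d`
  set w := δ * (l * b / δ + 1) with hw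
  have hw1 : l * b < w := Nat.lt_mul_div_succ _ hδ0
  have hw2 : w ≤ l * b + δ := by
    have := Nat.mul_div_le (l * b) δ
    rw [hw, mul_add, mul_one]
    omega
  obtain ⟨a, ha⟩ : ∃ a : ZMod d, ((k - l : ℕ) : ZMod d) * a = w := by
    have hbez := Nat.gcd_eq_gcd_ab d (k - l)
    have h2 := congrArg (fun z : ℤ => (z : ZMod d)) hbez
    simp only [Int.cast_natCast, Int.cast_add, Int.cast_mul, ZMod.natCast_self, zero_mul,
      zero_add] at h2
    refine ⟨(Nat.gcdB d (k - l) : ZMod d) * ((l * b / δ + 1 : ℕ) : ZMod d), ?_⟩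
    rw [← mul_assoc, ← h2, hw, Nat.cast_mul]
  have hfree : KLSumFree k l ((range (b + 1)).image fun i : ℕ => a + (i : ZMod d)) := by
    refine Finset.disjoint_left.2 fun z hz hz' => ?_
    obtain ⟨u, hu, rfl⟩ := mem_foldSum_interval a k z hz
    obtain ⟨v, hv, he⟩ := mem_foldSum_interval a l _ hz'
    simp only [Nat.add_sub_cancel] at hu hv
    have hka : (k : ZMod d) * a = w + l * a := by
      rw [← ha, ← add_mul, ← Nat.cast_add, Nat.sub_add_cancel hkl.le]
    have h0 : ((w + u - v : ℕ) : ZMod d) = 0 := by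
      rw [Nat.cast_sub (by omega), Nat.cast_add, sub_eq_zero]
      rw [hka, add_assoc, add_comm ((l : ZMod d) * a), ← add_assoc, add_comm _ (v : ZMod d)] at he
      exact add_right_cancel he
    rw [ZMod.natCast_eq_zero_iff] at h0
    have h1 := Nat.le_of_dvd (by omega) h0
    rw [add_mul] at hb1
    omega
  have hcard : #((range (b + 1)).image fun i : ℕ => a + (i : ZMod d)) = b + 1 := by
    rw [card_image_of_injOn, card_range]
    intro i hi j hj hij
    simp only [coe_range, Set.mem_Iio] at hi hj
    have hbd : b < d := by
      have : b ≤ (k + l) * b := Nat.le_mul_of_pos_left b (by omega)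
      omega
    have h1 := (ZMod.natCast_eq_natCast_iff' i j d).1 (add_left_cancel hij)
    rwa [Nat.mod_eq_of_lt (by omega), Nat.mod_eq_of_lt (by omega)] at h1
  have := card_le_mu hfree
  rw [hcard] at this
  exact hcd.trans (Nat.mul_le_mul_left _ this)

/-- The upper bound for a cyclic group of order dividing `e`, which is a quotient of `ZMod e`. -/
lemma cyclic_bound {C : Type*} [AddCommGroup C] [Fintype C] [DecidableEq C] [IsAddCyclic C]
    {e k l : ℕ} [NeZero e] (he : ∀ c : C, e • c = 0) {A : Finset C}
    (hA : KLSumFree k l A) : #A * e ≤ mu (ZMod e) k l * Fintype.card C := by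
  have hdvd : Nat.card C ∣ e := by
    rw [← IsAddCyclic.exponent_eq_card]
    exact AddMonoid.exponent_dvd_of_forall_nsmul_eq_zero he
  set f : ZMod e →+ C := (zmodAddCyclicAddEquiv (G := C) inferInstance).toAddMonoidHom.comp
    (ZMod.castHom hdvd (ZMod (Nat.card C))).toAddMonoidHom with hf
  have hfs : Function.Surjective f :=
    (zmodAddCyclicAddEquiv (G := C) inferInstance).surjective.comp (ZMod.castHom_surjective hdvd)
  have h1 := card_preimage_mul f hfs A
  rw [ZMod.card] at h1
  rw [← h1]
  exact Nat.mul_le_mul_right _ (card_le_mu (hA.comap f (by simp)))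


/-- The character group of `G` is isomorphic to `G`, so it has an element of order `exponent G`;
the image of such a character is cyclic of that order. -/
lemma exists_surjective_zmod (G : Type*) [AddCommGroup G] [Fintype G] :
    ∃ f : G →+ ZMod (AddMonoid.exponent G), Function.Surjective f := by
  set H := Multiplicative G
  have hexp : Monoid.exponent H = AddMonoid.exponent G := Monoid.exponent_multiplicative
  have hne : Monoid.exponent H ≠ 0 := Monoid.exponent_ne_zero_of_finite
  have : NeZero (Monoid.exponent H) := ⟨hne⟩
  have : NeZero ((Monoid.exponent H : ℕ) : ℂ) := ⟨by exact_mod_cast hne⟩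
  obtain ⟨φ⟩ := CommGroup.monoidHom_mulEquiv_of_hasEnoughRootsOfUnity H ℂ
  obtain ⟨g, hg⟩ := Monoid.exists_orderOf_eq_exponent
    (Monoid.ExponentExists.of_finite (G := H))
  set χ := φ.symm g with hχ
  have hχo : orderOf χ = Monoid.exponent H := by rw [hχ, MulEquiv.orderOf_eq, hg]
  have : Finite χ.range := Set.finite_range χ
  have hcard : Nat.card (Additive χ.range) = AddMonoid.exponent G := by
    rw [← hexp]
    change Nat.card χ.range = _
    apply Nat.dvd_antisymm
    · rw [← IsCyclic.exponent_eq_card]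
      apply Monoid.exponent_dvd_of_forall_pow_eq_one
      rintro ⟨y, hy⟩
      apply Subtype.ext
      change y ^ Monoid.exponent H = 1
      obtain ⟨x, rfl⟩ := hy
      rw [← map_pow, Monoid.pow_exponent_eq_one, map_one]
    · rw [← hχo]
      apply orderOf_dvd_of_pow_eq_one
      refine MonoidHom.ext fun x => ?_
      have h1 : (⟨χ x, MonoidHom.mem_range.2 ⟨x, rfl⟩⟩ : χ.range) ^ Nat.card χ.range = 1 :=
        pow_card_eq_one'
      simpa using congrArg Subtype.val h1
  have hex : ∃ f : G →+ ZMod (Nat.card (Additive χ.range)), Function.Surjective f := by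
    refine ⟨(zmodAddCyclicAddEquiv (G := Additive χ.range)
      inferInstance).symm.toAddMonoidHom.comp (MonoidHom.toAdditiveRight χ.rangeRestrict), ?_⟩
    refine (zmodAddCyclicAddEquiv (G := Additive χ.range) inferInstance).symm.surjective.comp ?_
    exact χ.rangeRestrict_surjective
  rwa [hcard] at hex

end Zmod

/-! ### The upper bound -/

section Bound

universe u

/-- If `A` misses fewer than `|L|` elements of `A + L` and meets at least two cosets of `L`, then
`(k,l)`-sum-freeness of `A` passes to the quotient by `L`. -/
lemma sumFree_mod {G : Type*} [AddCommGroup G] [Fintype G] [DecidableEq G] {k l : ℕ}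
    (hl : 0 < l) (hkl : l < k) {A : Finset G} (hA : KLSumFree k l A) {L : AddSubgroup G}
    (hL : #(A + sgFinset L) + 1 ≤ #A + #(sgFinset L)) (hex : ∃ u ∈ A, ∃ v ∈ A, u - v ∉ L) :
    ∀ p ∈ foldSum k A, ∀ q ∈ foldSum l A, p - q ∉ L := by
  intro p hp q hq hpq
  obtain ⟨k, rfl⟩ : ∃ k', k = k' + 2 := ⟨k - 2, by omega⟩
  obtain ⟨l, rfl⟩ : ∃ l', l = l' + 1 := ⟨l - 1, by omega⟩
  -- a representation using elements from distinct cosets on the two sides can be corrected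
  have main : ∀ u ∈ A, ∀ v ∈ A, ∀ p ∈ foldSum (k + 1) A, ∀ q ∈ foldSum l A,
      u - v ∉ L → (u + p) - (v + q) ∈ L → False := by
    intro u hu v hv p hp q hq huv h
    obtain ⟨u', hu', v', hv', he⟩ := exists_sub_eq hL (t := q - p) hu hv huv (by
      have : q - p - (u - v) = -((u + p) - (v + q)) := by abel
      rw [this]
      exact L.neg_mem h)
    refine Finset.disjoint_left.1 hA (Finset.add_mem_add hu' hp) ?_
    have : u' + p = v' + q := by
      rw [sub_eq_sub_iff_add_eq_add] at he
      rw [he, add_comm]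
    rw [this]
    exact Finset.add_mem_add hv' hq
  obtain ⟨u, hu, p', hp', rfl⟩ := Finset.mem_add.1 hp
  obtain ⟨u₂, hu₂, p'', hp'', rfl⟩ := Finset.mem_add.1 hp'
  obtain ⟨v, hv, q', hq', rfl⟩ := Finset.mem_add.1 hq
  by_cases huv : u - v ∈ L
  swap
  · exact main u hu v hv _ hp' q' hq' huv hpq
  by_cases hu₂v : u₂ - v ∈ L
  swap
  · refine main u₂ hu₂ v hv (u + p'') (Finset.add_mem_add hu hp'') q' hq' hu₂v ?_
    rwa [add_left_comm]
  -- all three lie in the coset of `v`: trade `u` and `v` for some `w` in another coset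
  have hw : ∃ w ∈ A, w - v ∉ L := by
    by_contra hcon
    push Not at hcon
    obtain ⟨x, hx, y, hy, hxy⟩ := hex
    apply hxy
    have := L.sub_mem (hcon x hx) (hcon y hy)
    simpa using this
  obtain ⟨w, hw, hwv⟩ := hw
  refine main u₂ hu₂ w hw (w + p'') (Finset.add_mem_add hw hp'') q' hq' ?_ ?_
  · intro h
    apply hwv
    have := L.sub_mem hu₂v h
    simpa using this
  · have : u₂ + (w + p'') - (w + q') = (u + (u₂ + p'') - (v + q')) - (u - v) := by abel
    rw [this]
    exact L.sub_mem hpq huv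

/-- A dense sum-free set contained in one coset of a proper subgroup generated by its differences
is sum-free modulo that subgroup. -/
lemma sumFree_mod_diffGroup {G : Type*} [AddCommGroup G] [Fintype G] [DecidableEq G] {k l : ℕ}
    (hl : 0 < l) (hkl : l < k) {A : Finset G} (hne : A.Nonempty) (hA : KLSumFree k l A)
    (hdense : Fintype.card G < (k + l) * #A) (hL : diffGroup A ≠ ⊤) :
    ∀ p ∈ foldSum k A, ∀ q ∈ foldSum l A, p - q ∉ diffGroup A := by
  intro p hp q hq hpq
  set L := diffGroup A with hLdef
  have hdiff := sub_mem_of_foldSum (A := A) (L := L) fun x hx y hy => sub_mem_diffGroup hx hy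
  have hindex : 2 * #(sgFinset L) ≤ Fintype.card G := by
    obtain ⟨z, hz⟩ : ∃ z, z ∉ L := by
      by_contra hcon
      push Not at hcon
      exact hL ((AddSubgroup.eq_top_iff' L).2 hcon)
    have := two_cosets (L := L) (A := univ) (mem_univ z) (mem_univ 0) (by simpa using hz)
    exact this.trans (card_le_univ _)
  have hsum : #(foldSum k A) + #(foldSum l A) ≤ #(sgFinset L) := by
    rw [← card_union_of_disjoint hA, ← Finset.card_vadd_finset q (sgFinset L)]
    apply card_le_card
    have hmem : ∀ z, z - q ∈ L → z ∈ q +ᵥ sgFinset L := fun z hz =>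
      Finset.mem_vadd_finset.2 ⟨z - q, by simpa using hz, by simp⟩
    refine union_subset (fun z hz => hmem z ?_) fun z hz => hmem z (hdiff l z hz q hq)
    have := L.add_mem (hdiff k z hz p hp) hpq
    simpa using this
  have hlpos : 0 < #(foldSum l A) := (foldSum_nonempty hne l).card_pos
  have hmono : ∀ i j, i ≤ j → #(foldSum i A) ≤ #(foldSum j A) := by
    intro i j hij
    induction j, hij using Nat.le_induction with
    | base => exact le_rfl
    | succ j _ ih =>
      rw [foldSum_succ']
      exact ih.trans (Finset.card_le_card_add_right hne)
  have hgrow : ∀ j, j < k → (j + 2) * #A ≤ 2 * #(foldSum (j + 1) A) := by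
    intro j
    induction j with
    | zero => intro _; simp [foldSum_one]
    | succ j ih =>
      intro hj
      have h1 := ih (by omega)
      have h2 := hmono (j + 1 + 1) k (by omega)
      rw [foldSum_succ'] at h2 ⊢
      have hlt : #(foldSum (j + 1) A + A) < #(sgFinset (diffGroup A)) := by
        rw [← hLdef]
        omega
      have h3 := olson_coset hne (foldSum_nonempty hne (j + 1)) (hdiff (j + 1)) hlt
      have : (j + 1 + 2) * #A = (j + 2) * #A + #A := by ring
      omega
  have hk := hgrow (k - 1) (by omega)
  have hl' := hgrow (l - 1) (by omega)
  rw [show k - 1 + 2 = k + 1 by omega, show k - 1 + 1 = k by omega] at hk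
  rw [show l - 1 + 2 = l + 1 by omega, show l - 1 + 1 = l by omega] at hl'
  have : (k + 1) * #A + (l + 1) * #A = (k + l) * #A + 2 * #A := by ring
  omega

/-- A dense sum-free set has an iterated sumset with small growth. -/
lemma exists_small_growth {G : Type*} [AddCommGroup G] [Fintype G] [DecidableEq G] {k l : ℕ}
    (hl : 0 < l) (hkl : l < k) {A : Finset G} (hA2 : 2 ≤ #A) (hA : KLSumFree k l A)
    (hdense : Fintype.card G < (k + l) * #A) :
    ∃ X : Finset G, 2 ≤ #X ∧ #(X + A) + 2 ≤ Fintype.card G ∧ #(X + A) + 1 ≤ #X + #A := by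
  have hne : A.Nonempty := card_pos.1 (by omega)
  have hmono : ∀ i j, i ≤ j → #(foldSum i A) ≤ #(foldSum j A) := by
    intro i j hij
    induction j, hij using Nat.le_induction with
    | base => exact le_rfl
    | succ j _ ih =>
      rw [foldSum_succ']
      exact ih.trans (Finset.card_le_card_add_right hne)
  have hsum : #(foldSum k A) + #(foldSum l A) ≤ Fintype.card G := by
    rw [← card_union_of_disjoint hA]
    exact card_le_univ _
  by_contra hcon
  push Not at hcon
  have hgrow : ∀ j, j < k → (j + 1) * #A ≤ #(foldSum (j + 1) A) := by
    intro j
    induction j with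
    | zero => intro _; simp [foldSum_one]
    | succ j ih =>
      intro hj
      have h1 := ih (by omega)
      have h2 := hmono (j + 1 + 1) k (by omega)
      have h3 := hmono 1 l hl
      have h4 := hmono 1 (j + 1) (by omega)
      rw [foldSum_one] at h3 h4
      rw [foldSum_succ'] at h2 ⊢
      have h5 := hcon (foldSum (j + 1) A) (by omega) (by omega)
      have : (j + 1 + 1) * #A = (j + 1) * #A + #A := by ring
      omega
  have hk := hgrow (k - 1) (by omega)
  have hl' := hgrow (l - 1) (by omega)
  rw [show k - 1 + 1 = k by omega] at hk
  rw [show l - 1 + 1 = l by omega] at hl'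
  rw [add_mul] at hdense
  omega

/-- The upper bound, by induction on the order of `G`: sum-free sets of density at most `1 / (k + l)`
are harmless by `hM`, and denser ones remain sum-free modulo a nontrivial subgroup unless they are
singletons or `G` is cyclic. -/
lemma main_bound {k l e : ℕ} [NeZero e] (hl : 0 < l) (hkl : l < k)
    (hM : e ≤ (k + l) * mu (ZMod e) k l) (n : ℕ) :
    ∀ (G : Type u) [AddCommGroup G] [Fintype G] [DecidableEq G], Fintype.card G = n →
      (∀ g : G, e • g = 0) → ∀ A : Finset G, KLSumFree k l A →
        #A * e ≤ mu (ZMod e) k l * Fintype.card G := by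
  induction n using Nat.strong_induction_on with
  | _ n ih =>
  intro G _ _ _ hn he A hA
  classical
  by_cases hdense : (k + l) * #A ≤ Fintype.card G
  · calc #A * e ≤ #A * ((k + l) * mu (ZMod e) k l) := Nat.mul_le_mul_left _ hM
      _ = mu (ZMod e) k l * ((k + l) * #A) := by ring
      _ ≤ _ := Nat.mul_le_mul_left _ hdense
  push Not at hdense
  by_cases hcyc : IsAddCyclic G
  · exact cyclic_bound he hA
  have hne : A.Nonempty := by
    rw [nonempty_iff_ne_empty]
    rintro rfl
    simp at hdense
  have hquot : ∀ L : AddSubgroup G, L ≠ ⊥ →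
      (∀ p ∈ foldSum k A, ∀ q ∈ foldSum l A, p - q ∉ L) →
      #A * e ≤ mu (ZMod e) k l * Fintype.card G := by
    intro L hLb hL
    have hmul : Fintype.card G = Fintype.card (G ⧸ L) * #(sgFinset L) := by
      rw [card_sgFinset, ← Nat.card_eq_fintype_card, ← Nat.card_eq_fintype_card]
      exact AddSubgroup.card_eq_card_quotient_mul_card_addSubgroup L
    have hL2 : 1 < #(sgFinset L) := by
      obtain ⟨g, hg, hg0⟩ := L.bot_or_exists_ne_zero.resolve_left hLb
      exact one_lt_card.2 ⟨0, by simp, g, by simpa using hg, hg0.symm⟩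
    have hqpos : 0 < Fintype.card (G ⧸ L) := Fintype.card_pos
    have hfree : KLSumFree k l (A.image (QuotientAddGroup.mk' L)) := by
      unfold KLSumFree
      rw [foldSum_image, foldSum_image]
      refine Finset.disjoint_left.2 fun z hz hz' => ?_
      obtain ⟨p, hp, rfl⟩ := mem_image.1 hz
      obtain ⟨q, hq, h⟩ := mem_image.1 hz'
      apply hL p hp q hq
      have := QuotientAddGroup.eq.1 h
      rwa [neg_add_eq_sub] at this
    have h1 := ih (Fintype.card (G ⧸ L)) (by
      rw [← hn, hmul]
      exact (Nat.lt_mul_iff_one_lt_right hqpos).2 hL2) (G ⧸ L) rfl (by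
        intro g
        obtain ⟨g, rfl⟩ := QuotientAddGroup.mk'_surjective L g
        rw [← map_nsmul, he, map_zero]) _ hfree
    have h2 : #A ≤ #(A.image (QuotientAddGroup.mk' L)) * #(sgFinset L) := by
      rw [mul_comm]
      apply card_le_mul_card_image
      intro b hb
      obtain ⟨a, ha, rfl⟩ := mem_image.1 hb
      rw [← Finset.card_vadd_finset a (sgFinset L)]
      apply card_le_card
      intro z hz
      have := QuotientAddGroup.eq.1 (mem_filter.1 hz).2.symm
      exact Finset.mem_vadd_finset.2 ⟨z - a, by rwa [mem_sgFinset, ← neg_add_eq_sub], by simp⟩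
    calc #A * e ≤ #(A.image (QuotientAddGroup.mk' L)) * #(sgFinset L) * e :=
          Nat.mul_le_mul_right _ h2
      _ = #(A.image (QuotientAddGroup.mk' L)) * e * #(sgFinset L) := by ring
      _ ≤ mu (ZMod e) k l * Fintype.card (G ⧸ L) * #(sgFinset L) := Nat.mul_le_mul_right _ h1
      _ = _ := by rw [hmul, mul_assoc]
  by_cases hgen : diffGroup A = ⊤
  · have hA2 : 2 ≤ #A := by
      by_contra hlt
      have h1 : #A ≤ 1 := by omega
      have h2 : (⊥ : AddSubgroup G) = ⊤ := affGen_iff.2 hgen ⊥ fun x hx y hy => by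
        rw [card_le_one.1 h1 x hx y hy]; simp
      have hzero : ∀ x : G, x = 0 := fun x => by
        have hx : x ∈ (⊥ : AddSubgroup G) := by rw [h2]; exact AddSubgroup.mem_top x
        simpa using hx
      exact hcyc ⟨0, fun x => ⟨0, by simp [hzero x]⟩⟩
    obtain ⟨L, hLb, hLt, hL⟩ : ∃ L : AddSubgroup G, L ≠ ⊥ ∧ L ≠ ⊤ ∧
        #(A + sgFinset L) + 1 ≤ #A + #(sgFinset L) := by
      rcases critical_pair _ A rfl (affGen_iff.2 hgen) hA2
        (exists_small_growth hl hkl hA2 hA hdense) with h | ⟨r, hr, h⟩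
      · exact h
      · refine ⟨AddSubgroup.zmultiples r, by simpa using hr, fun htop => hcyc ?_,
          almost_full_zmultiples h⟩
        exact ⟨r, fun x =>
          AddSubgroup.mem_zmultiples_iff.1 (by rw [htop]; exact AddSubgroup.mem_top x)⟩
    refine hquot L hLb (sumFree_mod hl hkl hA hL ?_)
    by_contra hcon
    push Not at hcon
    exact hLt (affGen_iff.2 hgen L hcon)
  · by_cases hbot : diffGroup A = ⊥
    · -- `A` is a singleton `{c}`, to be compared with the cyclic group generated by `c`
      obtain ⟨c, hc⟩ := hne
      set Z := AddSubgroup.zmultiples c with hZ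
      have hAc : A = {c} := by
        refine eq_singleton_iff_unique_mem.2 ⟨hc, fun x hx => ?_⟩
        have := sub_mem_diffGroup hx hc
        rwa [hbot, AddSubgroup.mem_bot, sub_eq_zero] at this
      have hfree : KLSumFree k l ({⟨c, AddSubgroup.mem_zmultiples c⟩} : Finset Z) :=
        hA.comap Z.subtype (by simp [hAc])
      have h1 := cyclic_bound (e := e) (fun z : Z => Subtype.ext (by simpa using he z)) hfree
      rw [hAc, card_singleton]
      rw [card_singleton] at h1
      exact h1.trans (Nat.mul_le_mul_left _ (Fintype.card_subtype_le _))
    · exact hquot _ hbot (sumFree_mod_diffGroup hl hkl hne hA hdense hgen)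

end Bound

theorem stmt15 (G : Type*) [AddCommGroup G] [Fintype G] [DecidableEq G]
    (k l : ℕ) (hl : 0 < l) (hkl : l < k)
    (hd : ∃ d : ℕ, 0 < d ∧ d ∣ AddMonoid.exponent G ∧
      ∀ j : ℕ, 1 ≤ j → j ≤ Nat.gcd d (k - l) → ¬ d ≡ j [MOD k + l]) :
    mu G k l = mu (ZMod (AddMonoid.exponent G)) k l *
      (Fintype.card G / AddMonoid.exponent G) := by
  obtain ⟨d, hd0, hde, hd⟩ := hd
  have hk : 0 < k := by omega
  set e := AddMonoid.exponent G with he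
  have : NeZero d := ⟨hd0.ne'⟩
  have he0 : e ≠ 0 := AddMonoid.exponent_ne_zero_of_finite
  have : NeZero e := ⟨he0⟩
  have hM : e ≤ (k + l) * mu (ZMod e) k l := by
    have h1 := interval_bound hl hkl hd
    have h2 := zmod_mu_mono l hk hde
    refine Nat.le_of_mul_le_mul_right ?_ hd0
    calc e * d ≤ e * ((k + l) * mu (ZMod d) k l) := Nat.mul_le_mul_left _ h1
      _ = (k + l) * (mu (ZMod d) k l * e) := by ring
      _ ≤ (k + l) * (mu (ZMod e) k l * d) := Nat.mul_le_mul_left _ h2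
      _ = _ := by ring
  obtain ⟨A, hA, hAc⟩ := exists_card_eq_mu (G := G) l hk
  have hupper := main_bound hl hkl hM _ G rfl
    (fun g => AddMonoid.exponent_nsmul_eq_zero g) A hA
  obtain ⟨f, hf⟩ := exists_surjective_zmod G
  have hlower := mu_mul_card_le l hk f hf
  rw [ZMod.card] at hlower
  rw [hAc] at hupper
  have hdvd : e ∣ Fintype.card G := AddGroup.exponent_dvd_card
  refine Nat.eq_of_mul_eq_mul_right (Nat.pos_of_ne_zero he0) ?_
  rw [mul_assoc, Nat.div_mul_cancel hdvd]
  exact le_antisymm hupper hlower
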